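/- Let 𝔤 be a finite-dimensional simple Lie algebra over ℂ, (π₁,v₁),…,(πₙ,vₙ) finite-dimensional cyclic 𝔤-modules, and Z a tuple of pairwise distinct complex numbers. Then the associated graded space ⊕_{i≥0} Fⁱ_Z/Fⁱ⁻¹_Z, with 𝔤 acting on each graded piece via the maps induced by the elements 1⊗x (each of which preserves every Fⁱ_Z), is isomorphic as a 𝔤-module to π₁⊗⋯⊗πₙ with the diagonal 𝔤-action. -/

import Mathlib

open scoped TensorProduct
open PiTensorProduct

namespace Fusion

variable {L : Type} {ι : Type} [Fintype ι] [DecidableEq ι]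
variable (π : ι → Type) [∀ i, AddCommGroup (π i)] [∀ i, Module ℂ (π i)]

/-- Apply the endomorphism `g` in the `i`-th slot of the tensor product. -/
noncomputable def slotE (i : ι) (g : Module.End ℂ (π i)) :
    Module.End ℂ (⨂[ℂ] j, π j) :=
  PiTensorProduct.map (Function.update (fun j => (LinearMap.id : π j →ₗ[ℂ] π j)) i g)

variable (ρ : ∀ i, L → Module.End ℂ (π i))

/-- The action of `t^k ⊗ x` on the evaluation tensor product `Π(Z)`. -/
noncomputable def monAct (z : ι → ℂ) (k : ℕ) (x : L) :
    Module.End ℂ (⨂[ℂ] j, π j) :=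
  ∑ i, (z i) ^ k • slotE π i (ρ i x)

/-- The action of `p ⊗ x` on the evaluation tensor product `Π(Z)`. -/
noncomputable def polyAct (z : ι → ℂ) (p : Polynomial ℂ) (x : L) :
    Module.End ℂ (⨂[ℂ] j, π j) :=
  ∑ i, p.eval (z i) • slotE π i (ρ i x)

variable (v : ∀ i, π i)

/-- `IsWord π ρ v z u d` : `u` is obtained from `v₁ ⊗ ⋯ ⊗ vₙ` by applying a monomial
`(t^{k₁}⊗x₁)⋯(t^{k_m}⊗x_m)` of total degree `d = k₁ + ⋯ + k_m` in `Π(Z)`. -/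
inductive IsWord (z : ι → ℂ) : (⨂[ℂ] j, π j) → ℕ → Prop
  | base : IsWord z (tprod ℂ v) 0
  | step (x : L) (k : ℕ) {u : ⨂[ℂ] j, π j} {d : ℕ} :
      IsWord z u d → IsWord z (monAct π ρ z k x u) (d + k)

/-- The filtration `Fⁱ_Z` on the tensor product. -/
noncomputable def F (z : ι → ℂ) (i : ℕ) : Submodule ℂ (⨂[ℂ] j, π j) :=
  Submodule.span ℂ {u | ∃ d ≤ i, IsWord π ρ v z u d}

lemma F_mono (z : ι → ℂ) {i j : ℕ} (h : i ≤ j) : F π ρ v z i ≤ F π ρ v z j :=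
  Submodule.span_mono (fun u ⟨d, hd, hw⟩ => ⟨d, hd.trans h, hw⟩)

lemma monAct_mem_F {z : ι → ℂ} (k : ℕ) (x : L) {i : ℕ} {u : ⨂[ℂ] j, π j}
    (hu : u ∈ F π ρ v z i) : monAct π ρ z k x u ∈ F π ρ v z (i + k) := by
  have : Submodule.map (monAct π ρ z k x) (F π ρ v z i) ≤ F π ρ v z (i + k) := by
    rw [F, Submodule.map_span]
    refine Submodule.span_le.2 ?_
    rintro _ ⟨u, ⟨d, hd, hw⟩, rfl⟩
    exact Submodule.subset_span ⟨d + k, by omega, hw.step x k⟩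
  exact this ⟨u, hu, rfl⟩

/-- `Fprev π ρ v z i` is `F^{i-1}`, with `F^{-1} = 0`. -/
noncomputable def Fprev (z : ι → ℂ) : ℕ → Submodule ℂ (⨂[ℂ] j, π j)
  | 0 => ⊥
  | (i + 1) => F π ρ v z i

lemma monAct_mem_Fprev {z : ι → ℂ} (k : ℕ) (x : L) {i : ℕ} {u : ⨂[ℂ] j, π j}
    (hu : u ∈ Fprev π ρ v z i) : monAct π ρ z k x u ∈ Fprev π ρ v z (i + k) := by
  cases i with
  | zero =>
      rw [Fprev, Submodule.mem_bot] at hu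
      subst hu
      simpa using (Fprev π ρ v z (0 + k)).zero_mem
  | succ i =>
      have : monAct π ρ z k x u ∈ F π ρ v z (i + k) := monAct_mem_F π ρ v k x hu
      have he : Fprev π ρ v z (i + 1 + k) = F π ρ v z (i + k) := by
        rw [show i + 1 + k = (i + k) + 1 by omega]; rfl
      rwa [he]

/-- The `i`-th graded piece `grⁱ_Z = Fⁱ_Z / F^{i-1}_Z` of the fusion product. -/
noncomputable abbrev gr (z : ι → ℂ) (i : ℕ) : Type :=
  ↥(F π ρ v z i) ⧸ (Fprev π ρ v z i).comap (F π ρ v z i).subtype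

/-- The map `grⁱ_Z → gr^{i+k}_Z` induced by the action of `t^k ⊗ x`. -/
noncomputable def grMap (z : ι → ℂ) (k : ℕ) (x : L) (i : ℕ) :
    gr π ρ v z i →ₗ[ℂ] gr π ρ v z (i + k) :=
  Submodule.mapQ _ _
    ((monAct π ρ z k x).restrict (fun u hu => monAct_mem_F π ρ v k x hu))
    (fun u hu => monAct_mem_Fprev π ρ v k x hu)

/-- The class of `v₁ ⊗ ⋯ ⊗ vₙ` in `gr⁰_Z`. -/
noncomputable def vbar (z : ι → ℂ) : gr π ρ v z 0 :=
  Submodule.Quotient.mk ⟨tprod ℂ v, Submodule.subset_span ⟨0, le_refl 0, IsWord.base⟩⟩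

end Fusion
namespace FusionAux

open LieModule LieAlgebra

section Weyl

set_option linter.unusedSectionVars false

variable {L : Type} [LieRing L] [LieAlgebra ℂ L]

/-- Invariance of the Casimir tensor, in the form of a statement about bilinear maps. -/
lemma casimir_invariant {κ : Type} [Fintype κ] [DecidableEq κ] {P : Type} [AddCommGroup P]
    [Module ℂ P] (B : LinearMap.BilinForm ℂ L) (hB : B.Nondegenerate) (hs : B.IsSymm)
    (hinv : ∀ x y z : L, B ⁅x, y⁆ z = - B y ⁅x, z⁆) (b : Module.Basis κ ℂ L)
    (T : L →ₗ[ℂ] L →ₗ[ℂ] P) (x : L) :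
    ∑ i, (T ⁅x, b i⁆ (B.dualBasis hB b i) + T (b i) ⁅x, B.dualBasis hB b i⁆) = 0 := by
  set c := B.dualBasis hB b with hc
  have h1 : ∀ i, ⁅x, b i⁆ = ∑ j, B ⁅x, b i⁆ (c j) • b j := by
    intro i
    conv_lhs => rw [← b.sum_repr ⁅x, b i⁆]
    refine Finset.sum_congr rfl fun j _ => ?_
    congr 1
    have := LinearMap.BilinForm.dualBasis_repr_apply hB c ⁅x, b i⁆ j
    rwa [hc, LinearMap.BilinForm.dualBasis_dualBasis hB hs] at this
  have h2 : ∀ i, ⁅x, c i⁆ = ∑ j, B ⁅x, c i⁆ (b j) • c j := by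
    intro i
    conv_lhs => rw [← c.sum_repr ⁅x, c i⁆]
    refine Finset.sum_congr rfl fun j _ => ?_
    rw [hc, LinearMap.BilinForm.dualBasis_repr_apply hB b]
  have h3 : ∀ i j, B ⁅x, c i⁆ (b j) = - B ⁅x, b j⁆ (c i) := by
    intro i j
    rw [hinv, hs.eq]
  rw [Finset.sum_add_distrib]
  have e1 : ∑ i, T ⁅x, b i⁆ (c i) = ∑ i, ∑ j, B ⁅x, b i⁆ (c j) • T (b j) (c i) := by
    refine Finset.sum_congr rfl fun i _ => ?_
    conv_lhs => rw [h1 i]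
    simp
  have e2 : ∑ i, T (b i) ⁅x, c i⁆ = - ∑ i, ∑ j, B ⁅x, b j⁆ (c i) • T (b i) (c j) := by
    rw [← Finset.sum_neg_distrib]
    refine Finset.sum_congr rfl fun i _ => ?_
    conv_lhs => rw [h2 i]
    simp [h3]
  rw [e1, e2, Finset.sum_comm, add_neg_cancel]

variable [IsSimple ℂ L] [FiniteDimensional ℂ L]


lemma span_lie_eq_top : Submodule.span ℂ {m : L | ∃ x y : L, ⁅x, y⁆ = m} = ⊤ := by
  have h : derivedSeries ℂ L 1 = ⊤ := by
    refine (IsSimple.eq_bot_or_eq_top (R := ℂ) (derivedSeries ℂ L 1)).resolve_left fun h => ?_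
    refine IsSimple.non_abelian ℂ (L := L) ⟨fun x y => ?_⟩
    have h1 : ⁅x, y⁆ ∈ derivedSeries ℂ L 1 := by
      have : ⁅x, y⁆ ∈ (LieIdeal.toLieSubalgebra ℂ L (derivedSeries ℂ L 1)).toSubmodule := by
        rw [coe_derivedSeries_one_eq]
        exact Submodule.subset_span ⟨x, y, rfl⟩
      exact this
    rw [h] at h1
    simpa using h1
  rw [← coe_derivedSeries_one_eq, h]
  rfl

lemma derived_eq_top : derivedSeries ℂ L 1 = ⊤ := by
  rw [eq_top_iff]
  intro x _
  have : x ∈ (LieIdeal.toLieSubalgebra ℂ L (derivedSeries ℂ L 1)).toSubmodule := by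
    rw [coe_derivedSeries_one_eq, span_lie_eq_top]
    trivial
  exact this

variable {M : Type} [AddCommGroup M] [Module ℂ M] [LieRingModule L M] [LieModule ℂ L M]

/-- In an irreducible module with vanishing trace form, the action is trivial. -/
lemma trivial_of_traceForm_eq_zero [FiniteDimensional ℂ M] [Nontrivial M]
    (hirr : ∀ N : LieSubmodule ℂ L M, N = ⊥ ∨ N = ⊤)
    (h : traceForm ℂ L M = 0) (x : L) (m : M) : ⁅x, m⁆ = 0 := by
  have hn : LieModule.IsNilpotent (derivedSeries ℂ L 1) M :=
    isNilpotent_derivedSeries_of_traceForm_eq_zero h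
  have hnt := nontrivial_max_triv_of_isNilpotent ℂ (derivedSeries ℂ L 1) M
  obtain ⟨⟨w, hw⟩, hw0⟩ := exists_ne (0 : maxTrivSubmodule ℂ (derivedSeries ℂ L 1) M)
  have hw' : w ∈ maxTrivSubmodule ℂ L M := by
    rw [mem_maxTrivSubmodule] at hw ⊢
    intro y
    exact hw ⟨y, by rw [derived_eq_top]; trivial⟩
  rcases hirr (maxTrivSubmodule ℂ L M) with h1 | h1
  · rw [h1, LieSubmodule.mem_bot] at hw'
    exact absurd (Subtype.ext hw') hw0
  · have : m ∈ maxTrivSubmodule ℂ L M := by rw [h1]; trivial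
    exact (mem_maxTrivSubmodule ℂ L M m).1 this x

lemma traceForm_nondegenerate (h : traceForm ℂ L M ≠ 0) :
    (traceForm ℂ L M).Nondegenerate := by
  rw [LinearMap.BilinForm.nondegenerate_iff_ker_eq_bot]
  let K : LieIdeal ℂ L :=
    { LinearMap.ker (traceForm ℂ L M) with
      lie_mem := by
        intro x y hy
        change y ∈ LinearMap.ker (traceForm ℂ L M) at hy
        change ⁅x, y⁆ ∈ LinearMap.ker (traceForm ℂ L M)
        rw [LinearMap.mem_ker] at hy ⊢
        ext z
        rw [traceForm_apply_lie_apply', hy]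
        simp }
  rcases IsSimple.eq_bot_or_eq_top (R := ℂ) K with h1 | h1
  · rw [eq_bot_iff]
    intro x hx
    have : x ∈ K := hx
    rw [h1] at this
    simpa using this
  · exfalso
    apply h
    ext x y
    have : x ∈ K := by rw [h1]; trivial
    have hx : x ∈ LinearMap.ker (traceForm ℂ L M) := this
    rw [LinearMap.mem_ker] at hx
    simp [hx]

/-- Whitehead's first lemma, irreducible case. -/
lemma whitehead_irred [FiniteDimensional ℂ M] [Nontrivial M]
    (hirr : ∀ N : LieSubmodule ℂ L M, N = ⊥ ∨ N = ⊤)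
    (f : L →ₗ[ℂ] M) (hf : ∀ x y, f ⁅x, y⁆ = ⁅x, f y⁆ - ⁅y, f x⁆) :
    ∃ m : M, ∀ x, f x = ⁅x, m⁆ := by
  by_cases h0 : traceForm ℂ L M = 0
  · have htriv := trivial_of_traceForm_eq_zero hirr h0
    refine ⟨0, fun x => ?_⟩
    rw [lie_zero]
    have hx : x ∈ Submodule.span ℂ {m : L | ∃ x y : L, ⁅x, y⁆ = m} := by
      rw [span_lie_eq_top]; trivial
    induction hx using Submodule.span_induction with
    | mem x h => obtain ⟨u, w, rfl⟩ := h; simp [hf, htriv]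
    | zero => simp
    | add x y _ _ hx hy => simp [hx, hy]
    | smul a x _ hx => simp [hx]
  · have hB := traceForm_nondegenerate h0
    set B := traceForm ℂ L M with hBdef
    have hs : B.IsSymm := ⟨traceForm_comm ℂ L M⟩
    have hinv : ∀ x y z : L, B ⁅x, y⁆ z = - B y ⁅x, z⁆ := traceForm_apply_lie_apply' ℂ L M
    let b := Module.finBasis ℂ L
    let c := B.dualBasis hB b
    have hcas := fun {P : Type} [AddCommGroup P] [Module ℂ P] (T : L →ₗ[ℂ] L →ₗ[ℂ] P) (x : L) =>
      casimir_invariant B hB hs hinv b T x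
    let φ : L →ₗ[ℂ] Module.End ℂ M := (toEnd ℂ L M : L →ₗ[ℂ] Module.End ℂ M)
    let C : Module.End ℂ M := ∑ i, φ (b i) ∘ₗ φ (c i)
    have hCa : ∀ m, C m = ∑ i, ⁅b i, ⁅c i, m⁆⁆ := by
      intro m
      simp [C, φ, LinearMap.sum_apply]
    have hCcomm : ∀ (x : L) (m : M), ⁅x, C m⁆ = C ⁅x, m⁆ := by
      intro x m
      have h := hcas (((LinearMap.mul ℂ (Module.End ℂ M)).compl₁₂ φ φ).compr₂
        (LinearMap.applyₗ m)) x
      simp only [LinearMap.compr₂_apply, LinearMap.compl₁₂_apply, LinearMap.mul_apply',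
        LinearMap.applyₗ_apply_apply, Module.End.mul_apply] at h
      change ∑ i, (⁅⁅x, b i⁆, ⁅c i, m⁆⁆ + ⁅b i, ⁅⁅x, c i⁆, m⁆⁆) = 0 at h
      rw [hCa, hCa, lie_sum, ← sub_eq_zero, ← Finset.sum_sub_distrib, ← h]
      refine Finset.sum_congr rfl fun i _ => ?_
      rw [lie_lie, lie_lie (M := M) x (c i), lie_sub]
      abel
    have htr : LinearMap.trace ℂ M C = Module.finrank ℂ L := by
      have h1 : ∀ i, LinearMap.trace ℂ M (φ (b i) ∘ₗ φ (c i)) = 1 := by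
        intro i
        have := LinearMap.BilinForm.apply_dualBasis_right hB hs b i i
        rw [if_pos rfl] at this
        exact this
      simp [C, map_sum, h1]
    have hLpos : Module.finrank ℂ L ≠ 0 := by
      intro hL
      have : Subsingleton L := Module.finrank_zero_iff.1 hL
      exact IsSimple.non_abelian ℂ (L := L) ⟨fun x y => Subsingleton.elim _ _⟩
    let K : LieSubmodule ℂ L M :=
      { LinearMap.ker C with
        lie_mem := by
          intro x m hm
          change m ∈ LinearMap.ker C at hm
          change ⁅x, m⁆ ∈ LinearMap.ker C
          rw [LinearMap.mem_ker] at hm ⊢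
          rw [← hCcomm, hm, lie_zero] }
    have hker : LinearMap.ker C = ⊥ := by
      rcases hirr K with h1 | h1
      · rw [eq_bot_iff]
        intro m hm
        have : m ∈ K := hm
        rw [h1] at this
        simpa using this
      · exfalso
        have hC0 : C = 0 := by
          ext m
          have : m ∈ K := by rw [h1]; trivial
          exact this
        rw [hC0, map_zero] at htr
        exact hLpos (by exact_mod_cast htr.symm)
    have hinj : Function.Injective C := LinearMap.ker_eq_bot.1 hker
    have hsurj : Function.Surjective C := LinearMap.surjective_of_injective hinj
    obtain ⟨m, hm⟩ := hsurj (∑ i, ⁅b i, f (c i)⁆)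
    refine ⟨m, fun x => hinj ?_⟩
    rw [← hCcomm, hm, hCa, lie_sum]
    have h := hcas (φ.compl₂ f) x
    simp only [LinearMap.compl₂_apply] at h
    change ∑ i, (⁅⁅x, b i⁆, f (c i)⁆ + ⁅b i, f ⁅x, c i⁆⁆) = 0 at h
    symm
    rw [← sub_eq_zero, ← Finset.sum_sub_distrib, ← h]
    refine Finset.sum_congr rfl fun i _ => ?_
    rw [lie_lie, hf, lie_sub]
    abel

/-- Whitehead's first lemma. -/
lemma whitehead (d : ℕ) : ∀ (M : Type) [AddCommGroup M] [Module ℂ M] [LieRingModule L M]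
    [LieModule ℂ L M] [FiniteDimensional ℂ M], Module.finrank ℂ M = d →
    ∀ (f : L →ₗ[ℂ] M), (∀ x y, f ⁅x, y⁆ = ⁅x, f y⁆ - ⁅y, f x⁆) →
    ∃ m : M, ∀ x, f x = ⁅x, m⁆ := by
  induction d using Nat.strong_induction_on with
  | _ d ih =>
  intro M _ _ _ _ _ hd f hf
  rcases subsingleton_or_nontrivial M with hM | hM
  · exact ⟨0, fun x => Subsingleton.elim _ _⟩
  by_cases hirr : ∀ N : LieSubmodule ℂ L M, N = ⊥ ∨ N = ⊤
  · exact whitehead_irred hirr f hf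
  push Not at hirr
  obtain ⟨N, hN0, hN1⟩ := hirr
  have hlt : Module.finrank ℂ N < d := by
    rw [← hd]
    exact Submodule.finrank_lt (s := N.toSubmodule) (by
      simpa using hN1)
  have hpos : 0 < Module.finrank ℂ N := by
    have : Nontrivial N := (LieSubmodule.nontrivial_iff_ne_bot ℂ L M).2 hN0
    exact Module.finrank_pos
  have hq : Module.finrank ℂ (M ⧸ N) < d := by
    have := Submodule.finrank_quotient_add_finrank N.toSubmodule
    change Module.finrank ℂ (M ⧸ N) + Module.finrank ℂ N = _ at this
    omega
  have : FiniteDimensional ℂ (M ⧸ N) :=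
    inferInstanceAs (FiniteDimensional ℂ (M ⧸ N.toSubmodule))
  obtain ⟨q, hqq⟩ := ih _ hq (M ⧸ N) rfl
    ((LieSubmodule.Quotient.mk' N : M →ₗ[ℂ] M ⧸ N) ∘ₗ f) (by
      intro x y
      change LieSubmodule.Quotient.mk' N (f ⁅x, y⁆) = ⁅x, LieSubmodule.Quotient.mk' N (f y)⁆ -
        ⁅y, LieSubmodule.Quotient.mk' N (f x)⁆
      rw [hf, map_sub, LieModuleHom.map_lie, LieModuleHom.map_lie])
  obtain ⟨m, rfl⟩ := LieSubmodule.Quotient.surjective_mk' N q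
  have hmem : ∀ x, f x - ⁅x, m⁆ ∈ N := by
    intro x
    have h := hqq x
    change LieSubmodule.Quotient.mk' N (f x) = ⁅x, LieSubmodule.Quotient.mk' N m⁆ at h
    rw [← LieModuleHom.map_lie, ← sub_eq_zero, ← map_sub] at h
    exact (LieSubmodule.Quotient.mk_eq_zero (N := N)).1 h
  let g : L →ₗ[ℂ] N :=
    { toFun := fun x => ⟨f x - ⁅x, m⁆, hmem x⟩
      map_add' := by
        intro x y
        ext
        simp only [map_add, add_lie, LieSubmodule.coe_add]
        abel
      map_smul' := by
        intro a x
        ext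
        simp [smul_sub] }
  obtain ⟨w, hw⟩ := ih _ hlt N rfl g (by
    intro x y
    ext
    change f ⁅x, y⁆ - ⁅⁅x, y⁆, m⁆ = ⁅x, f y - ⁅y, m⁆⁆ - ⁅y, f x - ⁅x, m⁆⁆
    rw [hf, lie_lie, lie_sub, lie_sub]
    abel)
  refine ⟨m + w, fun x => ?_⟩
  have h := congrArg (Subtype.val) (hw x)
  change f x - ⁅x, m⁆ = ⁅x, (w : M)⁆ at h
  rw [lie_add, ← h]
  abel

/-- Weyl's theorem: every Lie submodule is the image of an equivariant projection. -/
lemma weyl [FiniteDimensional ℂ M] (N : LieSubmodule ℂ L M) :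
    ∃ p : M →ₗ[ℂ] M, (∀ m, p m ∈ N) ∧ (∀ m ∈ N, p m = m) ∧
      ∀ (x : L) (m : M), p ⁅x, m⁆ = ⁅x, p m⁆ := by
  obtain ⟨p, hp⟩ := LinearMap.exists_leftInverse_of_injective N.toSubmodule.subtype
    N.toSubmodule.ker_subtype
  let p₀ : M →ₗ[ℂ] M := N.toSubmodule.subtype ∘ₗ p
  have hp1 : ∀ m, p₀ m ∈ N := fun m => (p m).2
  have hp2 : ∀ m ∈ N, p₀ m = m := fun m hm =>
    congrArg Subtype.val (LinearMap.congr_fun hp ⟨m, hm⟩)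
  let W : LieSubmodule ℂ L (M →ₗ[ℂ] M) :=
    { carrier := {A | (∀ m, A m ∈ N) ∧ ∀ m ∈ N, A m = 0}
      add_mem' := by
        rintro A B ⟨h1, h2⟩ ⟨h3, h4⟩
        exact ⟨fun m => N.add_mem (h1 m) (h3 m), fun m hm => by simp [h2 m hm, h4 m hm]⟩
      zero_mem' := ⟨fun m => N.zero_mem, fun m _ => rfl⟩
      smul_mem' := by
        rintro a A ⟨h1, h2⟩
        exact ⟨fun m => N.smul_mem a (h1 m), fun m hm => by simp [h2 m hm]⟩
      lie_mem := by
        rintro x A ⟨h1, h2⟩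
        refine ⟨fun m => ?_, fun m hm => ?_⟩
        · rw [LieHom.lie_apply]
          exact N.sub_mem (N.lie_mem (h1 m)) (h1 _)
        · rw [LieHom.lie_apply, h2 m hm, h2 _ (N.lie_mem hm)]
          simp }
  have hmem : ∀ x : L, ⁅x, p₀⁆ ∈ W := by
    intro x
    refine ⟨fun m => ?_, fun m hm => ?_⟩
    · rw [LieHom.lie_apply]
      exact N.sub_mem (N.lie_mem (hp1 m)) (hp1 _)
    · rw [LieHom.lie_apply, hp2 m hm, hp2 _ (N.lie_mem hm), sub_self]
  let f : L →ₗ[ℂ] W :=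
    { toFun := fun x => ⟨⁅x, p₀⁆, hmem x⟩
      map_add' := by intro x y; ext1; exact add_lie x y p₀
      map_smul' := by intro a x; ext1; exact smul_lie a x p₀ }
  obtain ⟨⟨w, hw1, hw2⟩, hw⟩ := whitehead _ W rfl f (by
    intro x y
    ext1
    exact lie_lie x y p₀)
  refine ⟨p₀ - w, fun m => N.sub_mem (hp1 m) (hw1 m), fun m hm => ?_, fun x m => ?_⟩
  · rw [LinearMap.sub_apply, hp2 m hm, hw2 m hm, sub_zero]
  · have h : ⁅x, p₀⁆ = ⁅x, w⁆ := congrArg Subtype.val (hw x)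
    have h1 := LinearMap.congr_fun h m
    rw [LieHom.lie_apply, LieHom.lie_apply] at h1
    rw [LinearMap.sub_apply, LinearMap.sub_apply, lie_sub]
    rw [sub_eq_sub_iff_add_eq_add] at h1 ⊢
    rw [add_comm (p₀ _)]
    exact h1.symm

end Weyl
end FusionAux

namespace FusionAux

open Fusion

section Slots

variable {ι : Type} [Fintype ι] [DecidableEq ι]
variable (π : ι → Type) [∀ i, AddCommGroup (π i)] [∀ i, Module ℂ (π i)]

lemma slotE_tprod (i : ι) (g : Module.End ℂ (π i)) (m : ∀ i, π i) :
    slotE π i g (tprod ℂ m) = tprod ℂ (Function.update m i (g (m i))) := by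
  rw [slotE, PiTensorProduct.map_tprod]
  congr 1
  funext j
  by_cases h : j = i
  · subst h; simp
  · simp [h]

lemma slotE_add (i : ι) (g h : Module.End ℂ (π i)) :
    slotE π i (g + h) = slotE π i g + slotE π i h :=
  PiTensorProduct.map_update_add _ i g h

lemma slotE_smul (i : ι) (a : ℂ) (g : Module.End ℂ (π i)) :
    slotE π i (a • g) = a • slotE π i g :=
  PiTensorProduct.map_update_smul _ i a g

lemma slotE_mul (i : ι) (g h : Module.End ℂ (π i)) :
    slotE π i (g * h) = slotE π i g * slotE π i h := by
  apply PiTensorProduct.ext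
  ext m
  simp [slotE_tprod]

lemma slotE_comm {i j : ι} (hij : i ≠ j) (g : Module.End ℂ (π i)) (h : Module.End ℂ (π j)) :
    slotE π i g * slotE π j h = slotE π j h * slotE π i g := by
  apply PiTensorProduct.ext
  ext m
  simp only [LinearMap.compMultilinearMap_apply, Module.End.mul_apply, slotE_tprod]
  rw [Function.update_comm hij, Function.update_of_ne hij, Function.update_of_ne hij.symm]

lemma slotE_sub (i : ι) (g h : Module.End ℂ (π i)) :
    slotE π i (g - h) = slotE π i g - slotE π i h := by
  rw [eq_sub_iff_add_eq, ← slotE_add, sub_add_cancel]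

variable {L : Type} [LieRing L] [LieAlgebra ℂ L]
variable [∀ i, LieRingModule L (π i)] [∀ i, LieModule ℂ L (π i)]

/-- The diagonal action on the tensor product. -/
noncomputable def diag (x : L) : Module.End ℂ (⨂[ℂ] j, π j) :=
  ∑ j, slotE π j (LieModule.toEnd ℂ L (π j) x)

lemma diag_add (x y : L) : diag π (x + y) = diag π x + diag π y := by
  simp [diag, slotE_add, Finset.sum_add_distrib]

lemma diag_smul (a : ℂ) (x : L) : diag π (a • x) = a • diag π x := by
  simp [diag, slotE_smul, Finset.smul_sum]

lemma diag_lie (x y : L) : diag π ⁅x, y⁆ = diag π x * diag π y - diag π y * diag π x := by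
  simp only [diag, Finset.sum_mul_sum]
  rw [Finset.sum_comm (f := fun i j => slotE π i (LieModule.toEnd ℂ L (π i) y) *
    slotE π j (LieModule.toEnd ℂ L (π j) x)), ← Finset.sum_sub_distrib]
  refine Finset.sum_congr rfl fun i _ => ?_
  rw [← Finset.sum_sub_distrib, Finset.sum_eq_single i]
  · rw [← slotE_mul, ← slotE_mul, ← slotE_sub]
    congr 1
    ext m
    exact lie_lie x y m
  · intro j _ hj
    rw [slotE_comm π hj.symm, sub_self]
  · simp

/-- The tensor product with diagonal action, as a Lie ring module. -/
noncomputable def tensorLieRingModule : LieRingModule L (⨂[ℂ] j, π j) where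
  bracket x m := diag π x m
  add_lie x y m := by
    change diag π (x + y) m = diag π x m + diag π y m
    rw [diag_add]; rfl
  lie_add x m n := map_add (diag π x) m n
  leibniz_lie x y m := by
    change diag π x (diag π y m) = diag π ⁅x, y⁆ m + diag π y (diag π x m)
    rw [diag_lie]
    simp

lemma tensorLieModule :
    @LieModule ℂ L (⨂[ℂ] j, π j) _ _ _ _ _ (tensorLieRingModule π) := by
  letI := tensorLieRingModule (L := L) π
  refine ⟨fun a x m => ?_, fun a x m => ?_⟩
  · change diag π (a • x) m = a • diag π x m
    rw [diag_smul]; rfl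
  · exact map_smul (diag π x) a m

/-- Weyl's theorem for the tensor product, in elementary form. -/
lemma weyl_tensor [LieAlgebra.IsSimple ℂ L] [FiniteDimensional ℂ L]
    [∀ i, FiniteDimensional ℂ (π i)]
    (N : Submodule ℂ (⨂[ℂ] j, π j)) (hN : ∀ (x : L), ∀ m ∈ N, diag π x m ∈ N) :
    ∃ p : (⨂[ℂ] j, π j) →ₗ[ℂ] (⨂[ℂ] j, π j), (∀ m, p m ∈ N) ∧ (∀ m ∈ N, p m = m) ∧
      ∀ (x : L) m, p (diag π x m) = diag π x (p m) := by
  letI := tensorLieRingModule (L := L) π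
  letI := tensorLieModule (L := L) π
  exact weyl (L := L) (M := ⨂[ℂ] j, π j) { N with lie_mem := fun {x m} hm => hN x m hm }

variable (v : ∀ i, π i)

/-- The span of all words is everything. -/
lemma words_span (hcyc : ∀ i, ∀ N : LieSubmodule ℂ L (π i), v i ∈ N → N = ⊤)
    (z : ι → ℂ) (hz : Function.Injective z)
    (W : Submodule ℂ (⨂[ℂ] j, π j)) (hv : tprod ℂ v ∈ W)
    (hW : ∀ (k : ℕ) (x : L), ∀ u ∈ W,
      monAct π (fun i x => LieModule.toEnd ℂ L (π i) x) z k x u ∈ W) : W = ⊤ := by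
  have hpoly : ∀ (p : Polynomial ℂ) (x : L), ∀ u ∈ W,
      polyAct π (fun i x => LieModule.toEnd ℂ L (π i) x) z p x u ∈ W := by
    intro p x u hu
    induction p using Polynomial.induction_on' with
    | add p q hp hq =>
      have : polyAct π (fun i x => LieModule.toEnd ℂ L (π i) x) z (p + q) x =
          polyAct π (fun i x => LieModule.toEnd ℂ L (π i) x) z p x +
          polyAct π (fun i x => LieModule.toEnd ℂ L (π i) x) z q x := by
        simp [polyAct, add_smul, Finset.sum_add_distrib]
      rw [this]
      exact W.add_mem hp hq
    | monomial k a =>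
      have : polyAct π (fun i x => LieModule.toEnd ℂ L (π i) x) z (Polynomial.monomial k a) x =
          a • monAct π (fun i x => LieModule.toEnd ℂ L (π i) x) z k x := by
        simp [polyAct, monAct, Finset.smul_sum, smul_smul]
      rw [this]
      exact W.smul_mem a (hW k x u hu)
  have hslot : ∀ (i : ι) (x : L), ∀ u ∈ W, slotE π i (LieModule.toEnd ℂ L (π i) x) u ∈ W := by
    intro i x u hu
    have h := hpoly (Lagrange.basis Finset.univ z i) x u hu
    have e : polyAct π (fun i x => LieModule.toEnd ℂ L (π i) x) z
        (Lagrange.basis Finset.univ z i) x = slotE π i (LieModule.toEnd ℂ L (π i) x) := by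
      rw [polyAct, Finset.sum_eq_single i]
      · rw [Lagrange.eval_basis_self hz.injOn (Finset.mem_univ i), one_smul]
      · intro j _ hj
        rw [Lagrange.eval_basis_of_ne hj.symm (Finset.mem_univ j), zero_smul]
      · simp
    rwa [e] at h
  have key : ∀ (S : Finset ι) (m : ∀ i, π i), (∀ i ∉ S, m i = v i) → tprod ℂ m ∈ W := by
    intro S
    induction S using Finset.induction_on with
    | empty =>
      intro m hm
      have : m = v := funext fun i => hm i (by simp)
      rwa [this]
    | insert i S hi ih =>
      intro m hm
      let N : LieSubmodule ℂ L (π i) :=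
        { carrier := {y | tprod ℂ (Function.update m i y) ∈ W}
          add_mem' := by
            intro a b ha hb
            simp only [Set.mem_setOf_eq] at ha hb ⊢
            rw [MultilinearMap.map_update_add]
            exact W.add_mem ha hb
          zero_mem' := by
            simp only [Set.mem_setOf_eq]
            rw [MultilinearMap.map_update_zero]
            exact W.zero_mem
          smul_mem' := by
            intro a y hy
            simp only [Set.mem_setOf_eq] at hy ⊢
            rw [MultilinearMap.map_update_smul]
            exact W.smul_mem a hy
          lie_mem := by
            intro x y hy
            have h := hslot i x _ hy
            rw [slotE_tprod] at h
            simpa using h }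
      have hN := hcyc i N (ih (Function.update m i (v i)) (by
        intro j hj
        by_cases h : j = i
        · subst h; simp
        · rw [Function.update_of_ne h]
          exact hm j (by simp [h, hj])))
      have : m i ∈ N := by rw [hN]; trivial
      have h2 : tprod ℂ (Function.update m i (m i)) ∈ W := this
      rwa [Function.update_eq_self] at h2
  rw [eq_top_iff, ← PiTensorProduct.span_tprod_eq_top, Submodule.span_le]
  rintro _ ⟨m, rfl⟩
  exact key Finset.univ m (by simp)

end Slots

end FusionAux

open Fusion DirectSum in
/-- For a simple Lie algebra `𝔤`, the associated graded space
`⊕ᵢ Fⁱ_Z/Fⁱ⁻¹_Z` of the filtered tensor product, with `𝔤` acting via the maps induced by the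
elements `1 ⊗ x`, is isomorphic as a `𝔤`-module to `π₁ ⊗ ⋯ ⊗ πₙ` with the diagonal action. -/
theorem associated_graded_iso_tensor_product
    {L : Type} [LieRing L] [LieAlgebra ℂ L] [LieAlgebra.IsSimple ℂ L]
    [FiniteDimensional ℂ L]
    (n : ℕ) (π : Fin n → Type) [∀ i, AddCommGroup (π i)] [∀ i, Module ℂ (π i)]
    [∀ i, LieRingModule L (π i)] [∀ i, LieModule ℂ L (π i)]
    [∀ i, FiniteDimensional ℂ (π i)]
    (v : ∀ i, π i)
    (hcyc : ∀ i, ∀ N : LieSubmodule ℂ L (π i), v i ∈ N → N = ⊤)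
    (z : Fin n → ℂ) (hz : Function.Injective z) :
    ∃ φ : (⨁ i : ℕ, gr π (fun i x => LieModule.toEnd ℂ L (π i) x) v z i) ≃ₗ[ℂ]
        ⨂[ℂ] i, π i,
      ∀ (x : L) (i : ℕ) (u : gr π (fun i x => LieModule.toEnd ℂ L (π i) x) v z i),
        φ (DirectSum.lof ℂ ℕ (fun j => gr π (fun i x => LieModule.toEnd ℂ L (π i) x) v z j) i
            (grMap π (fun i x => LieModule.toEnd ℂ L (π i) x) v z 0 x i u)) =
          (∑ j, slotE π j (LieModule.toEnd ℂ L (π j) x))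
            (φ (DirectSum.lof ℂ ℕ
              (fun j => gr π (fun i x => LieModule.toEnd ℂ L (π i) x) v z j) i u)) := by
  classical
  set ρ : ∀ i, L → Module.End ℂ (π i) := fun i x => LieModule.toEnd ℂ L (π i) x with hρ
  have hmon : ∀ x : L, monAct π ρ z 0 x = FusionAux.diag π x := by
    intro x
    simp [monAct, FusionAux.diag, hρ]
  have hprev : ∀ i, Fprev π ρ v z i ≤ F π ρ v z i := by
    intro i
    cases i with
    | zero => exact bot_le
    | succ i => exact F_mono π ρ v z (Nat.le_succ i)
  -- equivariant sections of the graded pieces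
  have hsec : ∀ i, ∃ s : gr π ρ v z i →ₗ[ℂ] (⨂[ℂ] j, π j),
      (∀ u : F π ρ v z i, (u : ⨂[ℂ] j, π j) - s (Submodule.Quotient.mk u) ∈ Fprev π ρ v z i) ∧
      ∀ (x : L) u, s (grMap π ρ v z 0 x i u) = FusionAux.diag π x (s u) := by
    intro i
    obtain ⟨p, hp1, hp2, hp3⟩ := FusionAux.weyl_tensor π (L := L) (Fprev π ρ v z i) (by
      intro x m hm
      rw [← hmon]
      exact monAct_mem_Fprev π ρ v 0 x hm)
    refine ⟨Submodule.liftQ _ ((LinearMap.id - p) ∘ₗ (F π ρ v z i).subtype) ?_, ?_, ?_⟩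
    · intro u hu
      have h : (u : ⨂[ℂ] j, π j) ∈ Fprev π ρ v z i := hu
      simp [hp2 _ h]
    · intro u
      rw [Submodule.liftQ_apply]
      simpa using hp1 u
    · intro x u
      obtain ⟨u, rfl⟩ := Submodule.Quotient.mk_surjective _ u
      change monAct π ρ z 0 x (u : ⨂[ℂ] j, π j) - p (monAct π ρ z 0 x (u : ⨂[ℂ] j, π j)) =
        FusionAux.diag π x ((u : ⨂[ℂ] j, π j) - p (u : ⨂[ℂ] j, π j))
      rw [hmon, hp3, map_sub]
  choose s hs1 hs2 using hsec
  have hs_mem : ∀ i u, s i u ∈ F π ρ v z i := by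
    intro i u
    obtain ⟨u, rfl⟩ := Submodule.Quotient.mk_surjective _ u
    have h := (F π ρ v z i).sub_mem u.2 (hprev i (hs1 i u))
    simpa using h
  have hs_zero : ∀ i u, s i u ∈ Fprev π ρ v z i → u = 0 := by
    intro i u hu
    obtain ⟨u, rfl⟩ := Submodule.Quotient.mk_surjective _ u
    rw [Submodule.Quotient.mk_eq_zero]
    have h := (Fprev π ρ v z i).add_mem (hs1 i u) hu
    simpa using h
  let φ₀ := DirectSum.toModule ℂ ℕ (⨂[ℂ] j, π j) s
  have hφ : ∀ i u, φ₀ (DirectSum.lof ℂ ℕ (fun j => gr π ρ v z j) i u) = s i u :=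
    fun i u => DirectSum.toModule_lof ℂ i u
  have hsum : ∀ N (a : ∀ j, gr π ρ v z j),
      ∑ j ∈ Finset.range N, s j (a j) ∈ Fprev π ρ v z N := by
    intro N a
    cases N with
    | zero => simp
    | succ N =>
      refine Submodule.sum_mem _ fun j hj => ?_
      exact F_mono π ρ v z (Nat.lt_succ_iff.1 (Finset.mem_range.1 hj)) (hs_mem j (a j))
  have hindep : ∀ N (a : ∀ j, gr π ρ v z j),
      ∑ j ∈ Finset.range N, s j (a j) = 0 → ∀ j < N, a j = 0 := by
    intro N a
    induction N with
    | zero => intro _ j hj; omega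
    | succ N ih =>
      intro h j hj
      rw [Finset.sum_range_succ] at h
      have h0 : a N = 0 := by
        apply hs_zero
        rw [eq_neg_of_add_eq_zero_right h]
        exact Submodule.neg_mem _ (hsum N a)
      rcases Nat.lt_succ_iff_lt_or_eq.1 hj with h1 | h1
      · exact ih (by simpa [h0] using h) j h1
      · rw [h1, h0]
  have hexp : ∀ a : (⨁ i : ℕ, gr π ρ v z i), ∃ N, (∀ j, N ≤ j → a j = 0) ∧
      ∀ M, N ≤ M → φ₀ a = ∑ j ∈ Finset.range M, s j (a j) := by
    intro a
    obtain ⟨N, hN⟩ := (DFinsupp.support a).exists_nat_subset_range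
    have h0 : ∀ j, N ≤ j → a j = 0 := by
      intro j hj
      by_contra hne
      have := Finset.mem_range.1 (hN (DFinsupp.mem_support_iff.2 hne))
      omega
    refine ⟨N, h0, fun M hM => ?_⟩
    conv_lhs => rw [← DirectSum.sum_support_of a]
    rw [map_sum]
    refine (Finset.sum_congr rfl fun j _ => hφ j (a j)).trans ?_
    refine Finset.sum_subset (hN.trans (Finset.range_mono hM)) fun j _ hj => ?_
    rw [DFinsupp.notMem_support_iff.1 hj, map_zero]
  have hinj : Function.Injective φ₀ := by
    intro a b hab
    obtain ⟨N, hN0, hN⟩ := hexp a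
    obtain ⟨M, hM0, hM⟩ := hexp b
    rw [hN (max N M) (le_max_left _ _), hM (max N M) (le_max_right _ _), ← sub_eq_zero,
      ← Finset.sum_sub_distrib] at hab
    have h := hindep (max N M) (fun j => a j - b j) (by simpa only [map_sub] using hab)
    refine DFinsupp.ext fun j => ?_
    by_cases hj : j < max N M
    · exact sub_eq_zero.1 (h j hj)
    · exact (hN0 j (by omega)).trans (hM0 j (by omega)).symm
  have hFr : ∀ i, F π ρ v z i ≤ LinearMap.range φ₀ := by
    intro i
    induction i with
    | zero =>
      intro u hu
      have h : u - s 0 (Submodule.Quotient.mk ⟨u, hu⟩) ∈ (⊥ : Submodule ℂ (⨂[ℂ] j, π j)) :=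
        hs1 0 ⟨u, hu⟩
      rw [Submodule.mem_bot, sub_eq_zero] at h
      exact ⟨_, (hφ 0 _).trans h.symm⟩
    | succ i ih =>
      intro u hu
      have h := ih (hs1 (i + 1) ⟨u, hu⟩)
      have h2 := Submodule.add_mem _ h ⟨_, hφ (i + 1) (Submodule.Quotient.mk ⟨u, hu⟩)⟩
      simpa using h2
  have hsurj : Function.Surjective φ₀ := by
    have hW := FusionAux.words_span π v hcyc z hz
      (Submodule.span ℂ {u | ∃ d, IsWord π ρ v z u d})
      (Submodule.subset_span ⟨0, IsWord.base⟩) (by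
        intro k x u hu
        induction hu using Submodule.span_induction with
        | mem u h => obtain ⟨d, hd⟩ := h; exact Submodule.subset_span ⟨d + k, hd.step x k⟩
        | zero => rw [map_zero]; exact Submodule.zero_mem _
        | add a b _ _ ha hb => rw [map_add]; exact Submodule.add_mem _ ha hb
        | smul c a _ ha => rw [map_smul]; exact Submodule.smul_mem _ c ha)
    rw [← LinearMap.range_eq_top, eq_top_iff, ← hW, Submodule.span_le]
    rintro u ⟨d, hd⟩
    exact hFr d (Submodule.subset_span ⟨d, le_rfl, hd⟩)
  have hbij : Function.Bijective φ₀ := ⟨hinj, hsurj⟩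
  refine ⟨LinearEquiv.ofBijective φ₀ hbij, fun x i u => ?_⟩
  have e1 : φ₀ (DirectSum.lof ℂ ℕ (fun j => gr π ρ v z j) i (grMap π ρ v z 0 x i u)) =
      FusionAux.diag π x (φ₀ (DirectSum.lof ℂ ℕ (fun j => gr π ρ v z j) i u)) := by
    rw [hφ i u]
    exact (hφ i _).trans (hs2 i x u)
  exact e1
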